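/- arXiv:2311.12667 — 9 statements merged into one kernel-verified Lean document; each statement's English description precedes it below -/
import Mathlib

section
/- For all t₀ ≤ t₁: E(t₁) + Σ_{m=1}^M (2/τ_m) ∫_{t₀}^{t₁} a_VE^m(u_VE^m(s), u_VE^m(s)) ds = E(t₀) (the energy conservation law for the weak formulation of dynamic linear viscoelasticity with the generalized Maxwell model and zero body force and traction). -/
theorem quad_hasDerivAt {V : Type*} [NormedAddCommGroup V] [NormedSpace ℝ V]
    (B : V →L[ℝ] V →L[ℝ] ℝ) (hB : ∀ x y : V, B x y = B y x) (u : ℝ → V) (u' : V) (t : ℝ)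
    (hu : HasDerivAt u u' t) : HasDerivAt (fun s => B (u s) (u s)) (2 * B u' (u t)) t := by
  have h1 : HasDerivAt (fun s => B (u s)) (B u') t := B.hasFDerivAt.comp_hasDerivAt t hu
  have h2 := h1.clm_apply hu
  refine h2.congr_deriv ?_
  rw [hB (u t) u']
  ring

/-- Energy conservation for the weak formulation of dynamic linear viscoelasticity
with the generalized Maxwell model (`M` Maxwell arms) and zero body force and
traction: for `t₀ ≤ t₁`,
`E(t₁) + ∑_m (2/τ_m) ∫_{t₀}^{t₁} a_VE^m(u_VE^m(s), u_VE^m(s)) ds = E(t₀)`,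
where `E(t) = m(u₁,u₁) + a_E(u₀,u₀) + ∑_m a_VE^m(u_VE^m,u_VE^m)`. -/
theorem viscoelastic_energy_conservation
    {V : Type*} [NormedAddCommGroup V] [NormedSpace ℝ V]
    (M : ℕ) (hM : 1 ≤ M)
    (mF aE : V →L[ℝ] V →L[ℝ] ℝ) (aVE : Fin M → V →L[ℝ] V →L[ℝ] ℝ)
    (hmF_symm : ∀ x y : V, mF x y = mF y x)
    (haE_symm : ∀ x y : V, aE x y = aE y x)
    (haVE_symm : ∀ (m : Fin M) (x y : V), aVE m x y = aVE m y x)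
    (τ : Fin M → ℝ) (hτ : ∀ m, 0 < τ m)
    (t₀ t₁ : ℝ) (ht : t₀ ≤ t₁)
    (u1 u0 u1' u0' : ℝ → V) (uVE uVE' : Fin M → ℝ → V)
    (hu1 : ∀ t, HasDerivAt u1 (u1' t) t) (hu1' : Continuous u1')
    (hu0 : ∀ t, HasDerivAt u0 (u0' t) t) (hu0' : Continuous u0')
    (huVE : ∀ m t, HasDerivAt (uVE m) (uVE' m t) t)
    (huVE' : ∀ m, Continuous (uVE' m))
    (heq1 : ∀ t ∈ Set.Icc t₀ t₁, ∀ w : V,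
      mF (u1' t) w + aE (u0 t) w + ∑ m, aVE m (uVE m t) w = 0)
    (heq2 : ∀ t ∈ Set.Icc t₀ t₁, ∀ w : V, aE (u0' t - u1 t) w = 0)
    (heq3 : ∀ t ∈ Set.Icc t₀ t₁, ∀ (m : Fin M) (w : V),
      aVE m (uVE' m t + (1 / τ m) • uVE m t - u1 t) w = 0) :
    (mF (u1 t₁) (u1 t₁) + aE (u0 t₁) (u0 t₁)
        + ∑ m, aVE m (uVE m t₁) (uVE m t₁))
      + ∑ m, (2 / τ m) * ∫ s in t₀..t₁, aVE m (uVE m s) (uVE m s)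
    = mF (u1 t₀) (u1 t₀) + aE (u0 t₀) (u0 t₀)
        + ∑ m, aVE m (uVE m t₀) (uVE m t₀) := by
  have hc : ∀ m, Continuous (uVE m) := fun m =>
    continuous_iff_continuousAt.2 fun t => (huVE m t).continuousAt
  have hcq : ∀ m, Continuous (fun s => aVE m (uVE m s) (uVE m s)) := fun m =>
    ((aVE m).continuous.comp (hc m)).clm_apply (hc m)
  have hd : ∀ t ∈ Set.uIcc t₀ t₁, HasDerivAt
      (fun t => mF (u1 t) (u1 t) + aE (u0 t) (u0 t) + ∑ m, aVE m (uVE m t) (uVE m t))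
      (-∑ m, (2 / τ m) * aVE m (uVE m t) (uVE m t)) t := by
    intro t htt
    rw [Set.uIcc_of_le ht] at htt
    have h := ((quad_hasDerivAt mF hmF_symm u1 _ t (hu1 t)).add
      (quad_hasDerivAt aE haE_symm u0 _ t (hu0 t))).add
      (HasDerivAt.fun_sum (u := Finset.univ) fun m _ =>
        quad_hasDerivAt (aVE m) (haVE_symm m) (uVE m) _ t (huVE m t))
    refine h.congr_deriv ?_
    have e1 := heq1 t htt (u1 t)
    have e2 := heq2 t htt (u0 t)
    rw [map_sub, _root_.sub_apply, haE_symm (u1 t)] at e2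
    have e3 : ∀ m, 2 * aVE m (uVE' m t) (uVE m t)
        = 2 * aVE m (uVE m t) (u1 t) - (2 / τ m) * aVE m (uVE m t) (uVE m t) := by
      intro m
      have e := heq3 t htt m (uVE m t)
      simp only [map_sub, map_add, map_smul, _root_.sub_apply,
        _root_.add_apply, ContinuousLinearMap.smul_apply, smul_eq_mul] at e
      rw [haVE_symm m (u1 t)] at e
      linear_combination 2 * e
    rw [Finset.sum_congr rfl fun m _ => e3 m, Finset.sum_sub_distrib, ← Finset.mul_sum]
    linear_combination 2 * e1 + 2 * e2
  have hint := intervalIntegral.integral_eq_sub_of_hasDerivAt hd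
    (Continuous.intervalIntegrable
      (continuous_finsetSum _ fun m _ => continuous_const.mul (hcq m)).neg _ _)
  rw [intervalIntegral.integral_neg, intervalIntegral.integral_finsetSum
    (f := fun m s => (2 / τ m) * aVE m (uVE m s) (uVE m s))
    (fun m _ => (continuous_const.mul (hcq m)).intervalIntegrable _ _)] at hint
  simp only [intervalIntegral.integral_const_mul] at hint
  linear_combination -hint
end

section
/- For any two node indices i ≤ j: E(t_j) + Σ_{m=1}^M (2/τ_m) Σ_{n=i+1}^{j} k_n · a_VE^m(Ū_{VE,n}^m, Ū_{VE,n}^m) = E(t_i), where Ū_{VE,n}^m = (U_VE^m(t_{n−1}) + U_VE^m(t_n))/2; i.e., the space-time finite element method with continuous piecewise linear trial functions and piecewise constant test functions in time satisfies the discrete energy conservation law. -/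
theorem integral_affine_aux (g : ℝ → ℝ) (a b p q : ℝ) (hab : a < b)
    (hg : ∀ s ∈ Set.Icc a b, g s = p + (s - a) / (b - a) * q) :
    ∫ s in a..b, g s = (b - a) * (p + q / 2) := by
  have hne : b - a ≠ 0 := by linarith
  have e : ∫ s in a..b, g s = ∫ s in a..b, ((p - a / (b - a) * q) + (q / (b - a)) * s) := by
    apply intervalIntegral.integral_congr
    intro s hs
    rw [Set.uIcc_of_le hab.le] at hs
    simp only [hg s hs]
    field_simp
    ring
  rw [e, intervalIntegral.integral_add (by simp)
    (Continuous.intervalIntegrable (by fun_prop) _ _)]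
  rw [intervalIntegral.integral_const_mul, integral_id, intervalIntegral.integral_const]
  simp only [smul_eq_mul]
  field_simp
  ring

theorem diff_sum_aux {V : Type*} [NormedAddCommGroup V] [NormedSpace ℝ V]
    (B : V →L[ℝ] V →L[ℝ] ℝ) (hB : ∀ x y : V, B x y = B y x) (x y : V) :
    B (y - x) (x + y) = B y y - B x x := by
  simp only [map_sub, map_add, sub_apply]
  rw [hB x y]; ring

/-- Discrete energy conservation for the space-time finite element method with
continuous piecewise linear trial functions and piecewise constant test functions
in time (zero data): for node indices `i ≤ j ≤ N`,
`E(t_j) + ∑_m (2/τ_m) ∑_{n=i+1}^{j} k_n a_VE^m(Ū_n^m, Ū_n^m) = E(t_i)`,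
where `Ū_n^m` is the midpoint value `(U_VE^m(t_{n-1}) + U_VE^m(t_n))/2`. -/
theorem viscoelastic_discrete_energy_conservation
    {V : Type*} [NormedAddCommGroup V] [NormedSpace ℝ V]
    (M N : ℕ) (hM : 1 ≤ M) (hN : 1 ≤ N)
    (mF aE : V →L[ℝ] V →L[ℝ] ℝ) (aVE : Fin M → V →L[ℝ] V →L[ℝ] ℝ)
    (hmF_symm : ∀ x y : V, mF x y = mF y x)
    (haE_symm : ∀ x y : V, aE x y = aE y x)
    (haVE_symm : ∀ (m : Fin M) (x y : V), aVE m x y = aVE m y x)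
    (τ : Fin M → ℝ) (hτ : ∀ m, 0 < τ m)
    (t : ℕ → ℝ) (ht0 : t 0 = 0) (htmono : ∀ n < N, t n < t (n + 1))
    (U1 U0 : ℝ → V) (UVE : Fin M → ℝ → V)
    -- `U1`, `U0`, `UVE m` are continuous and affine on each `[t_n, t_{n+1}]`
    (hU1aff : ∀ n < N, ∀ s ∈ Set.Icc (t n) (t (n + 1)),
      U1 s = U1 (t n) + ((s - t n) / (t (n + 1) - t n)) • (U1 (t (n + 1)) - U1 (t n)))
    (hU0aff : ∀ n < N, ∀ s ∈ Set.Icc (t n) (t (n + 1)),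
      U0 s = U0 (t n) + ((s - t n) / (t (n + 1) - t n)) • (U0 (t (n + 1)) - U0 (t n)))
    (hUVEaff : ∀ (m : Fin M), ∀ n < N, ∀ s ∈ Set.Icc (t n) (t (n + 1)),
      UVE m s = UVE m (t n)
        + ((s - t n) / (t (n + 1) - t n)) • (UVE m (t (n + 1)) - UVE m (t n)))
    -- the discrete variational equations (the time derivative of a trial
    -- function on `(t_n, t_{n+1})` is the constant `(W(t_{n+1}) - W(t_n))/k_n`)
    (h1 : ∀ n < N, ∀ w : V,
      (∫ s in t n..t (n + 1),
        (mF ((t (n + 1) - t n)⁻¹ • (U1 (t (n + 1)) - U1 (t n))) w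
          + aE (U0 s) w + ∑ m, aVE m (UVE m s) w)) = 0)
    (h2 : ∀ n < N, ∀ w : V,
      (∫ s in t n..t (n + 1),
        aE ((t (n + 1) - t n)⁻¹ • (U0 (t (n + 1)) - U0 (t n)) - U1 s) w) = 0)
    (h3 : ∀ n < N, ∀ (m : Fin M) (w : V),
      (∫ s in t n..t (n + 1),
        aVE m ((t (n + 1) - t n)⁻¹ • (UVE m (t (n + 1)) - UVE m (t n))
          + (1 / τ m) • UVE m s - U1 s) w) = 0) :
    ∀ i j : ℕ, i ≤ j → j ≤ N →
      (mF (U1 (t j)) (U1 (t j)) + aE (U0 (t j)) (U0 (t j))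
          + ∑ m, aVE m (UVE m (t j)) (UVE m (t j)))
        + ∑ m, (2 / τ m) *
            ∑ n ∈ Finset.Ico i j, (t (n + 1) - t n) *
              aVE m ((2:ℝ)⁻¹ • (UVE m (t n) + UVE m (t (n + 1))))
                ((2:ℝ)⁻¹ • (UVE m (t n) + UVE m (t (n + 1))))
      = mF (U1 (t i)) (U1 (t i)) + aE (U0 (t i)) (U0 (t i))
          + ∑ m, aVE m (UVE m (t i)) (UVE m (t i)) := by
  have step : ∀ n < N,
      (mF (U1 (t (n+1))) (U1 (t (n+1))) + aE (U0 (t (n+1))) (U0 (t (n+1)))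
          + ∑ m, aVE m (UVE m (t (n+1))) (UVE m (t (n+1))))
        + ∑ m, (2 / τ m) * ((t (n + 1) - t n) *
              aVE m ((2:ℝ)⁻¹ • (UVE m (t n) + UVE m (t (n + 1))))
                ((2:ℝ)⁻¹ • (UVE m (t n) + UVE m (t (n + 1)))))
      = mF (U1 (t n)) (U1 (t n)) + aE (U0 (t n)) (U0 (t n))
          + ∑ m, aVE m (UVE m (t n)) (UVE m (t n)) := by
    intro n hn
    have hk := htmono n hn
    have hne : t (n + 1) - t n ≠ 0 := by linarith
    have e1 : ∀ w, mF (U1 (t (n+1)) - U1 (t n)) w + (t (n+1) - t n) / 2 *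
        (aE (U0 (t n) + U0 (t (n+1))) w
          + ∑ m, aVE m (UVE m (t n) + UVE m (t (n+1))) w) = 0 := by
      intro w
      have h := h1 n hn w
      rw [integral_affine_aux _ _ _
        (mF ((t (n + 1) - t n)⁻¹ • (U1 (t (n + 1)) - U1 (t n))) w
          + aE (U0 (t n)) w + ∑ m, aVE m (UVE m (t n)) w)
        (aE (U0 (t (n+1)) - U0 (t n)) w
          + ∑ m, aVE m (UVE m (t (n+1)) - UVE m (t n)) w) hk] at h
      · rw [← h]
        simp only [map_sub, map_add, map_smul, sub_apply,
          add_apply, smul_apply, smul_eq_mul,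
          Finset.sum_add_distrib, Finset.sum_sub_distrib]
        field_simp
        ring
      · intro s hs
        have hV : ∀ m, aVE m (UVE m s) w = aVE m (UVE m (t n)) w +
            (s - t n) / (t (n + 1) - t n) * aVE m (UVE m (t (n+1)) - UVE m (t n)) w := by
          intro m
          rw [hUVEaff m n hn s hs]
          simp only [map_add, map_smul, add_apply,
            smul_apply, smul_eq_mul]
        rw [Finset.sum_congr rfl (fun m _ => hV m), Finset.sum_add_distrib, ← Finset.mul_sum,
          hU0aff n hn s hs]
        simp only [map_add, map_smul aE, add_apply,
          smul_apply, smul_eq_mul]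
        ring
    have e2 : ∀ w, aE (U0 (t (n+1)) - U0 (t n)) w
        = (t (n+1) - t n) / 2 * aE (U1 (t n) + U1 (t (n+1))) w := by
      intro w
      have h := h2 n hn w
      rw [integral_affine_aux _ _ _
        (aE ((t (n + 1) - t n)⁻¹ • (U0 (t (n + 1)) - U0 (t n)) - U1 (t n)) w)
        (- aE (U1 (t (n+1)) - U1 (t n)) w) hk] at h
      · rw [← sub_eq_zero, ← h]
        simp only [map_sub, map_add, map_smul, sub_apply,
          add_apply, smul_apply, smul_eq_mul]
        field_simp
        ring
      · intro s hs
        rw [hU1aff n hn s hs]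
        simp only [map_sub, map_add, map_smul, sub_apply,
          add_apply, smul_apply, smul_eq_mul]
        ring
    have e3 : ∀ m w, aVE m (UVE m (t (n+1)) - UVE m (t n)) w
        + (t (n+1) - t n) / (2 * τ m) * aVE m (UVE m (t n) + UVE m (t (n+1))) w
        = (t (n+1) - t n) / 2 * aVE m (U1 (t n) + U1 (t (n+1))) w := by
      intro m w
      have hτm := (hτ m).ne'
      have h := h3 n hn m w
      rw [integral_affine_aux _ _ _
        (aVE m ((t (n + 1) - t n)⁻¹ • (UVE m (t (n + 1)) - UVE m (t n))
          + (1 / τ m) • UVE m (t n) - U1 (t n)) w)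
        ((1 / τ m) * aVE m (UVE m (t (n+1)) - UVE m (t n)) w
          - aVE m (U1 (t (n+1)) - U1 (t n)) w) hk] at h
      · rw [← sub_eq_zero, ← h]
        simp only [map_sub, map_add, map_smul, sub_apply,
          add_apply, smul_apply, smul_eq_mul]
        field_simp
        ring
      · intro s hs
        rw [hU1aff n hn s hs, hUVEaff m n hn s hs]
        simp only [map_sub, map_add, map_smul, sub_apply,
          add_apply, smul_apply, smul_eq_mul]
        ring
    have f1 := e1 (U1 (t n) + U1 (t (n+1)))
    rw [diff_sum_aux mF hmF_symm, haE_symm] at f1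
    have f2 := e2 (U0 (t n) + U0 (t (n+1)))
    rw [diff_sum_aux aE haE_symm] at f2
    have f3 : ∑ m, aVE m (UVE m (t (n+1))) (UVE m (t (n+1)))
        + ∑ m, (2 / τ m) * ((t (n + 1) - t n) *
              aVE m ((2:ℝ)⁻¹ • (UVE m (t n) + UVE m (t (n + 1))))
                ((2:ℝ)⁻¹ • (UVE m (t n) + UVE m (t (n + 1)))))
        = ∑ m, aVE m (UVE m (t n)) (UVE m (t n)) + (t (n+1) - t n) / 2 *
          ∑ m, aVE m (UVE m (t n) + UVE m (t (n+1))) (U1 (t n) + U1 (t (n+1))) := by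
      rw [Finset.mul_sum, ← Finset.sum_add_distrib, ← Finset.sum_add_distrib]
      refine Finset.sum_congr rfl fun m _ => ?_
      have hτm := (hτ m).ne'
      have h := e3 m (UVE m (t n) + UVE m (t (n+1)))
      rw [diff_sum_aux (aVE m) (haVE_symm m),
        haVE_symm m (U1 (t n) + U1 (t (n+1)))] at h
      rw [← h]
      rw [map_smul (aVE m), smul_apply, map_smul, smul_eq_mul, smul_eq_mul]
      field_simp
      ring
    linarith
  intro i j hij
  induction j, hij using Nat.le_induction with
  | base => intro _; simp
  | succ n hin ih =>
    intro hn
    have h := ih (by omega)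
    have h' := step n (by omega)
    simp only [Finset.sum_Ico_succ_top hin, mul_add, Finset.sum_add_distrib]
    linarith
end

section
/- For any node indices i ≤ j: E(t_i) + Σ_{m=1}^M (2/τ_m) Σ_{n=i+1}^{j} k_n · a_VE^m(Φ̄_{VE,n}^m, Φ̄_{VE,n}^m) = E(t_j), where Φ̄_{VE,n}^m = (Φ_VE^m(t_{n−1}) + Φ_VE^m(t_n))/2; i.e., the discrete dual problem conserves energy backward in time. -/
/-- The trapezoidal rule is exact for functions that are affine on the interval. -/
theorem integral_of_affine_aux (f : ℝ → ℝ) (a b : ℝ) (hab : a < b)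
    (hf : ∀ s ∈ Set.Icc a b, f s = f a + ((s - a) / (b - a)) * (f b - f a)) :
    ∫ s in a..b, f s = (b - a) * ((f a + f b) / 2) := by
  have hne : b - a ≠ 0 := by linarith
  have h1 : ∫ s in a..b, f s
      = ∫ s in a..b, ((f a - a * ((f b - f a) / (b - a))) + ((f b - f a) / (b - a)) * s) := by
    apply intervalIntegral.integral_congr
    intro s hs
    rw [Set.uIcc_of_le hab.le] at hs
    simp only
    rw [hf s hs]
    field_simp
    ring
  rw [h1, intervalIntegral.integral_add (by simp)
    (Continuous.intervalIntegrable (by fun_prop) _ _),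
    intervalIntegral.integral_const, intervalIntegral.integral_const_mul, integral_id]
  simp only [smul_eq_mul]
  field_simp
  ring

/-- The discrete dual problem conserves energy backward in time: for node
indices `i ≤ j ≤ N`,
`E(t_i) + ∑_m (2/τ_m) ∑_{n=i+1}^{j} k_n a_VE^m(Φ̄_n^m, Φ̄_n^m) = E(t_j)`,
where `Φ̄_n^m = (Φ_VE^m(t_{n-1}) + Φ_VE^m(t_n))/2`. -/
theorem viscoelastic_dual_discrete_energy_conservation
    {V : Type*} [NormedAddCommGroup V] [NormedSpace ℝ V]
    (M N : ℕ) (hM : 1 ≤ M) (hN : 1 ≤ N)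
    (mF aE : V →L[ℝ] V →L[ℝ] ℝ) (aVE : Fin M → V →L[ℝ] V →L[ℝ] ℝ)
    (hmF_symm : ∀ x y : V, mF x y = mF y x)
    (haE_symm : ∀ x y : V, aE x y = aE y x)
    (haVE_symm : ∀ (m : Fin M) (x y : V), aVE m x y = aVE m y x)
    (τ : Fin M → ℝ) (hτ : ∀ m, 0 < τ m)
    (t : ℕ → ℝ) (ht0 : t 0 = 0) (htmono : ∀ n < N, t n < t (n + 1))
    (Φ1 Φ0 : ℝ → V) (ΦVE : Fin M → ℝ → V)
    -- `Φ1`, `Φ0`, `ΦVE m` are continuous and affine on each `[t_n, t_{n+1}]`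
    (hΦ1aff : ∀ n < N, ∀ s ∈ Set.Icc (t n) (t (n + 1)),
      Φ1 s = Φ1 (t n) + ((s - t n) / (t (n + 1) - t n)) • (Φ1 (t (n + 1)) - Φ1 (t n)))
    (hΦ0aff : ∀ n < N, ∀ s ∈ Set.Icc (t n) (t (n + 1)),
      Φ0 s = Φ0 (t n) + ((s - t n) / (t (n + 1) - t n)) • (Φ0 (t (n + 1)) - Φ0 (t n)))
    (hΦVEaff : ∀ (m : Fin M), ∀ n < N, ∀ s ∈ Set.Icc (t n) (t (n + 1)),
      ΦVE m s = ΦVE m (t n)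
        + ((s - t n) / (t (n + 1) - t n)) • (ΦVE m (t (n + 1)) - ΦVE m (t n)))
    -- the discrete dual equations (the time derivative of a trial function on
    -- `(t_n, t_{n+1})` is the constant `(W(t_{n+1}) - W(t_n))/k_n`)
    (hdual : ∀ n < N, ∀ (v1 v0 : V) (vVE : Fin M → V),
      (∫ s in t n..t (n + 1),
        (-(mF ((t (n + 1) - t n)⁻¹ • (Φ1 (t (n + 1)) - Φ1 (t n))) v1)
          - aE ((t (n + 1) - t n)⁻¹ • (Φ0 (t (n + 1)) - Φ0 (t n))) v0
          - ∑ m, aVE m ((t (n + 1) - t n)⁻¹ • (ΦVE m (t (n + 1)) - ΦVE m (t n))) (vVE m)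
          + aE (Φ0 s) v1 - aE (Φ1 s) v0
          + ∑ m, (aVE m (ΦVE m s) v1 - aVE m (Φ1 s) (vVE m)
              + (1 / τ m) * aVE m (ΦVE m s) (vVE m)))) = 0) :
    ∀ i j : ℕ, i ≤ j → j ≤ N →
      (mF (Φ1 (t i)) (Φ1 (t i)) + aE (Φ0 (t i)) (Φ0 (t i))
          + ∑ m, aVE m (ΦVE m (t i)) (ΦVE m (t i)))
        + ∑ m, (2 / τ m) *
            ∑ n ∈ Finset.Ico i j, (t (n + 1) - t n) *
              aVE m ((2:ℝ)⁻¹ • (ΦVE m (t n) + ΦVE m (t (n + 1))))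
                ((2:ℝ)⁻¹ • (ΦVE m (t n) + ΦVE m (t (n + 1))))
      = mF (Φ1 (t j)) (Φ1 (t j)) + aE (Φ0 (t j)) (Φ0 (t j))
          + ∑ m, aVE m (ΦVE m (t j)) (ΦVE m (t j)) := by
  have step : ∀ n < N,
      (mF (Φ1 (t n)) (Φ1 (t n)) + aE (Φ0 (t n)) (Φ0 (t n))
          + ∑ m, aVE m (ΦVE m (t n)) (ΦVE m (t n)))
        + ∑ m, (2 / τ m) * ((t (n + 1) - t n) *
              aVE m ((2:ℝ)⁻¹ • (ΦVE m (t n) + ΦVE m (t (n + 1))))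
                ((2:ℝ)⁻¹ • (ΦVE m (t n) + ΦVE m (t (n + 1)))))
      = mF (Φ1 (t (n + 1))) (Φ1 (t (n + 1))) + aE (Φ0 (t (n + 1))) (Φ0 (t (n + 1)))
          + ∑ m, aVE m (ΦVE m (t (n + 1))) (ΦVE m (t (n + 1))) := by
    intro n hn
    have hlt := htmono n hn
    have h := hdual n hn (Φ1 (t n) + Φ1 (t (n + 1))) (Φ0 (t n) + Φ0 (t (n + 1)))
      (fun m => ΦVE m (t n) + ΦVE m (t (n + 1)))
    have hk : t (n + 1) - t n ≠ 0 := by linarith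
    rw [integral_of_affine_aux _ _ _ hlt] at h
    · replace h := (mul_eq_zero.mp h).resolve_left hk
      have hS1 : ∑ m, aVE m ((t (n + 1) - t n)⁻¹ • (ΦVE m (t (n + 1)) - ΦVE m (t n)))
            (ΦVE m (t n) + ΦVE m (t (n + 1)))
          = (t (n + 1) - t n)⁻¹ * (∑ m, aVE m (ΦVE m (t (n + 1))) (ΦVE m (t (n + 1)))
            - ∑ m, aVE m (ΦVE m (t n)) (ΦVE m (t n))) := by
        rw [← Finset.sum_sub_distrib, Finset.mul_sum]
        refine Finset.sum_congr rfl fun m _ => ?_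
        simp only [map_smul, map_sub, map_add, smul_apply, sub_apply, smul_eq_mul]
        rw [haVE_symm m (ΦVE m (t (n + 1))) (ΦVE m (t n))]
        ring
      have hS2 : ∑ m, (2 / τ m) * ((t (n + 1) - t n) *
              aVE m ((2:ℝ)⁻¹ • (ΦVE m (t n) + ΦVE m (t (n + 1))))
                ((2:ℝ)⁻¹ • (ΦVE m (t n) + ΦVE m (t (n + 1)))))
          = (t (n + 1) - t n) / 2 *
          (∑ m, (aVE m (ΦVE m (t n)) (Φ1 (t n) + Φ1 (t (n + 1)))
              - aVE m (Φ1 (t n)) (ΦVE m (t n) + ΦVE m (t (n + 1)))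
              + (1 / τ m) * aVE m (ΦVE m (t n)) (ΦVE m (t n) + ΦVE m (t (n + 1))))
          + ∑ m, (aVE m (ΦVE m (t (n + 1))) (Φ1 (t n) + Φ1 (t (n + 1)))
              - aVE m (Φ1 (t (n + 1))) (ΦVE m (t n) + ΦVE m (t (n + 1)))
              + (1 / τ m) * aVE m (ΦVE m (t (n + 1))) (ΦVE m (t n) + ΦVE m (t (n + 1))))) := by
        rw [← Finset.sum_add_distrib, Finset.mul_sum]
        refine Finset.sum_congr rfl fun m _ => ?_
        simp only [map_smul, map_add, smul_apply, add_apply, smul_eq_mul]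
        rw [haVE_symm m (Φ1 (t n)) (ΦVE m (t n)), haVE_symm m (Φ1 (t n)) (ΦVE m (t (n + 1))),
          haVE_symm m (Φ1 (t (n + 1))) (ΦVE m (t n)),
          haVE_symm m (Φ1 (t (n + 1))) (ΦVE m (t (n + 1)))]
        ring
      rw [hS2]
      rw [hS1] at h
      generalize ∑ m, (aVE m (ΦVE m (t n)) (Φ1 (t n) + Φ1 (t (n + 1)))
              - aVE m (Φ1 (t n)) (ΦVE m (t n) + ΦVE m (t (n + 1)))
              + (1 / τ m) * aVE m (ΦVE m (t n)) (ΦVE m (t n) + ΦVE m (t (n + 1)))) = A at *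
      generalize ∑ m, (aVE m (ΦVE m (t (n + 1))) (Φ1 (t n) + Φ1 (t (n + 1)))
              - aVE m (Φ1 (t (n + 1))) (ΦVE m (t n) + ΦVE m (t (n + 1)))
              + (1 / τ m) * aVE m (ΦVE m (t (n + 1))) (ΦVE m (t n) + ΦVE m (t (n + 1)))) = B at *
      simp only [map_smul, map_sub, map_add, smul_apply, sub_apply, smul_eq_mul] at h
      rw [haE_symm (Φ1 (t n)) (Φ0 (t n)), haE_symm (Φ1 (t n)) (Φ0 (t (n + 1))),
          haE_symm (Φ1 (t (n + 1))) (Φ0 (t n)),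
          haE_symm (Φ1 (t (n + 1))) (Φ0 (t (n + 1))),
          haE_symm (Φ0 (t (n + 1))) (Φ0 (t n)),
          hmF_symm (Φ1 (t (n + 1))) (Φ1 (t n))] at h
      generalize t (n + 1) - t n = k at *
      field_simp at h
      linarith
    · intro s hs
      generalize hr : (s - t n) / (t (n + 1) - t n) = r
      have hS : ∑ m, (aVE m (ΦVE m s) (Φ1 (t n) + Φ1 (t (n + 1)))
              - aVE m (Φ1 s) (ΦVE m (t n) + ΦVE m (t (n + 1)))
              + (1 / τ m) * aVE m (ΦVE m s) (ΦVE m (t n) + ΦVE m (t (n + 1))))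
          = ∑ m, (aVE m (ΦVE m (t n)) (Φ1 (t n) + Φ1 (t (n + 1)))
              - aVE m (Φ1 (t n)) (ΦVE m (t n) + ΦVE m (t (n + 1)))
              + (1 / τ m) * aVE m (ΦVE m (t n)) (ΦVE m (t n) + ΦVE m (t (n + 1))))
          + r * (∑ m, (aVE m (ΦVE m (t (n + 1))) (Φ1 (t n) + Φ1 (t (n + 1)))
              - aVE m (Φ1 (t (n + 1))) (ΦVE m (t n) + ΦVE m (t (n + 1)))
              + (1 / τ m) * aVE m (ΦVE m (t (n + 1))) (ΦVE m (t n) + ΦVE m (t (n + 1))))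
            - ∑ m, (aVE m (ΦVE m (t n)) (Φ1 (t n) + Φ1 (t (n + 1)))
              - aVE m (Φ1 (t n)) (ΦVE m (t n) + ΦVE m (t (n + 1)))
              + (1 / τ m) * aVE m (ΦVE m (t n)) (ΦVE m (t n) + ΦVE m (t (n + 1))))) := by
        rw [← Finset.sum_sub_distrib, Finset.mul_sum, ← Finset.sum_add_distrib]
        refine Finset.sum_congr rfl fun m _ => ?_
        rw [hΦ1aff n hn s hs, hΦVEaff m n hn s hs, hr]
        simp only [map_smul, map_sub, map_add, smul_apply, add_apply, sub_apply, smul_eq_mul]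
        ring
      rw [hS, hΦ1aff n hn s hs, hΦ0aff n hn s hs, hr]
      simp only [map_smul, map_sub, map_add (aE), smul_apply, add_apply, sub_apply, smul_eq_mul]
      ring
  intro i j hij
  induction j, hij using Nat.le_induction with
  | base => intro _; simp
  | succ j hij ih =>
    intro hj
    rw [← step j (by omega), ← ih (by omega)]
    simp only [Finset.sum_Ico_succ_top hij, mul_add (2 / τ _), Finset.sum_add_distrib]
    ring
end

section
/- For every t ∈ [0,T]: |||(Φ_1(t), Φ_0(t), Φ_VE^1(t), …, Φ_VE^M(t))|||_A ≤ 2·|||(Φ_1(T), Φ_0(T), Φ_VE^1(T), …, Φ_VE^M(T))|||_A; i.e., the discrete dual solution is uniformly bounded in time in the energy seminorm by twice its end-time energy seminorm. -/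
theorem aux_integral (g : ℝ → ℝ) (a b A B : ℝ) (hab : a < b)
    (hg : ∀ s ∈ Set.Icc a b, g s = A + ((s - a) / (b - a)) * B)
    (h : ∫ s in a..b, g s = 0) : A + B / 2 = 0 := by
  have hk : b - a ≠ 0 := (sub_pos.2 hab).ne'
  have h1 : ∫ s in a..b, g s = ∫ s in a..b, ((A - a / (b - a) * B) + (B / (b - a)) * s) := by
    apply intervalIntegral.integral_congr
    intro s hs
    rw [Set.uIcc_of_le hab.le] at hs
    simp only [hg s hs]
    field_simp
    ring
  have h2 : ∫ s in a..b, ((A - a / (b - a) * B) + (B / (b - a)) * s)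
      = (b - a) * (A + B / 2) := by
    rw [intervalIntegral.integral_add (continuous_const.intervalIntegrable _ _)
      ((by fun_prop : Continuous fun s : ℝ => (B / (b - a)) * s).intervalIntegrable _ _)]
    rw [intervalIntegral.integral_const_mul, integral_id, intervalIntegral.integral_const]
    simp only [smul_eq_mul]
    field_simp
    ring
  rw [h1, h2] at h
  exact (mul_eq_zero.1 h).resolve_left hk

theorem aux_convex {V : Type*} [NormedAddCommGroup V] [NormedSpace ℝ V]
    (f : V →L[ℝ] V →L[ℝ] ℝ) (hs : ∀ x y, f x y = f y x) (hp : ∀ x, 0 ≤ f x x)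
    (p q : V) (r : ℝ) (h0 : 0 ≤ r) (h1 : r ≤ 1) :
    f (p + r • (q - p)) (p + r • (q - p)) ≤ (1 - r) * f p p + r * f q q := by
  have h := hp (q - p)
  have h2 := mul_nonneg (mul_nonneg h0 (sub_nonneg.2 h1)) h
  simp only [map_add, map_sub, map_smul, ContinuousLinearMap.add_apply,
    ContinuousLinearMap.sub_apply, ContinuousLinearMap.smul_apply, smul_eq_mul] at h2 ⊢
  rw [hs q p] at *
  nlinarith

theorem aux_tele {V : Type*} [NormedAddCommGroup V] [NormedSpace ℝ V]
    (f : V →L[ℝ] V →L[ℝ] ℝ) (hs : ∀ x y, f x y = f y x) (c : ℝ) (p q : V) :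
    f (c • (q - p)) (p + q) = c * (f q q - f p p) := by
  simp only [map_add, map_sub, map_smul, ContinuousLinearMap.sub_apply,
    ContinuousLinearMap.smul_apply, smul_eq_mul]
  rw [hs q p]; ring

/-- The discrete dual solution is uniformly bounded in time in the energy
seminorm by twice its end-time energy seminorm: for every `s ∈ [0, T]`,
`|||(Φ1(s), Φ0(s), ΦVE(s))|||_A ≤ 2 |||(Φ1(T), Φ0(T), ΦVE(T))|||_A`, where
`|||(v1,v0,vVE)|||_A = (m(v1,v1) + a_E(v0,v0) + ∑_m a_VE^m(vVE^m,vVE^m))^{1/2}`. -/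
theorem viscoelastic_dual_uniform_energy_bound
    {V : Type*} [NormedAddCommGroup V] [NormedSpace ℝ V]
    (M N : ℕ) (hM : 1 ≤ M) (hN : 1 ≤ N)
    (mF aE : V →L[ℝ] V →L[ℝ] ℝ) (aVE : Fin M → V →L[ℝ] V →L[ℝ] ℝ)
    (hmF_symm : ∀ x y : V, mF x y = mF y x)
    (haE_symm : ∀ x y : V, aE x y = aE y x)
    (haVE_symm : ∀ (m : Fin M) (x y : V), aVE m x y = aVE m y x)
    (hmF_pos : ∀ x : V, 0 ≤ mF x x)
    (haE_pos : ∀ x : V, 0 ≤ aE x x)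
    (haVE_pos : ∀ (m : Fin M) (x : V), 0 ≤ aVE m x x)
    (τ : Fin M → ℝ) (hτ : ∀ m, 0 < τ m)
    (t : ℕ → ℝ) (ht0 : t 0 = 0) (htmono : ∀ n < N, t n < t (n + 1))
    (Φ1 Φ0 : ℝ → V) (ΦVE : Fin M → ℝ → V)
    -- `Φ1`, `Φ0`, `ΦVE m` are continuous and affine on each `[t_n, t_{n+1}]`
    (hΦ1aff : ∀ n < N, ∀ s ∈ Set.Icc (t n) (t (n + 1)),
      Φ1 s = Φ1 (t n) + ((s - t n) / (t (n + 1) - t n)) • (Φ1 (t (n + 1)) - Φ1 (t n)))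
    (hΦ0aff : ∀ n < N, ∀ s ∈ Set.Icc (t n) (t (n + 1)),
      Φ0 s = Φ0 (t n) + ((s - t n) / (t (n + 1) - t n)) • (Φ0 (t (n + 1)) - Φ0 (t n)))
    (hΦVEaff : ∀ (m : Fin M), ∀ n < N, ∀ s ∈ Set.Icc (t n) (t (n + 1)),
      ΦVE m s = ΦVE m (t n)
        + ((s - t n) / (t (n + 1) - t n)) • (ΦVE m (t (n + 1)) - ΦVE m (t n)))
    -- the discrete dual equations (the time derivative of a trial function on
    -- `(t_n, t_{n+1})` is the constant `(W(t_{n+1}) - W(t_n))/k_n`)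
    (hdual : ∀ n < N, ∀ (v1 v0 : V) (vVE : Fin M → V),
      (∫ s in t n..t (n + 1),
        (-(mF ((t (n + 1) - t n)⁻¹ • (Φ1 (t (n + 1)) - Φ1 (t n))) v1)
          - aE ((t (n + 1) - t n)⁻¹ • (Φ0 (t (n + 1)) - Φ0 (t n))) v0
          - ∑ m, aVE m ((t (n + 1) - t n)⁻¹ • (ΦVE m (t (n + 1)) - ΦVE m (t n))) (vVE m)
          + aE (Φ0 s) v1 - aE (Φ1 s) v0
          + ∑ m, (aVE m (ΦVE m s) v1 - aVE m (Φ1 s) (vVE m)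
              + (1 / τ m) * aVE m (ΦVE m s) (vVE m)))) = 0) :
    ∀ s ∈ Set.Icc (t 0) (t N),
      Real.sqrt (mF (Φ1 s) (Φ1 s) + aE (Φ0 s) (Φ0 s)
          + ∑ m, aVE m (ΦVE m s) (ΦVE m s))
        ≤ 2 * Real.sqrt (mF (Φ1 (t N)) (Φ1 (t N)) + aE (Φ0 (t N)) (Φ0 (t N))
            + ∑ m, aVE m (ΦVE m (t N)) (ΦVE m (t N))) := by
  have hstep : ∀ n < N, mF (Φ1 (t n)) (Φ1 (t n)) + aE (Φ0 (t n)) (Φ0 (t n))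
          + ∑ m, aVE m (ΦVE m (t n)) (ΦVE m (t n))
        ≤ mF (Φ1 (t (n+1))) (Φ1 (t (n+1))) + aE (Φ0 (t (n+1))) (Φ0 (t (n+1)))
          + ∑ m, aVE m (ΦVE m (t (n+1))) (ΦVE m (t (n+1))) := by
    intro n hn
    have hd := hdual n hn (Φ1 (t n) + Φ1 (t (n+1))) (Φ0 (t n) + Φ0 (t (n+1)))
      (fun m => ΦVE m (t n) + ΦVE m (t (n+1)))
    have hk := htmono n hn
    have e1 := hΦ1aff n hn
    have e0 := hΦ0aff n hn
    have eV := fun m => hΦVEaff m n hn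
    simp only [aux_tele mF hmF_symm, aux_tele aE haE_symm,
      fun m => aux_tele (aVE m) (haVE_symm m)] at hd
    generalize t (n+1) = b at *
    generalize t n = a at *
    have key := aux_integral _ a b
      (-((b - a)⁻¹ * (mF (Φ1 b) (Φ1 b) - mF (Φ1 a) (Φ1 a)))
        - (b - a)⁻¹ * (aE (Φ0 b) (Φ0 b) - aE (Φ0 a) (Φ0 a))
        - ∑ m, (b - a)⁻¹ * (aVE m (ΦVE m b) (ΦVE m b) - aVE m (ΦVE m a) (ΦVE m a))
        + aE (Φ0 a) (Φ1 a + Φ1 b) - aE (Φ1 a) (Φ0 a + Φ0 b)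
        + ∑ m, (aVE m (ΦVE m a) (Φ1 a + Φ1 b) - aVE m (Φ1 a) (ΦVE m a + ΦVE m b)
              + (1 / τ m) * aVE m (ΦVE m a) (ΦVE m a + ΦVE m b)))
      (aE (Φ0 b - Φ0 a) (Φ1 a + Φ1 b) - aE (Φ1 b - Φ1 a) (Φ0 a + Φ0 b)
        + ∑ m, (aVE m (ΦVE m b - ΦVE m a) (Φ1 a + Φ1 b)
              - aVE m (Φ1 b - Φ1 a) (ΦVE m a + ΦVE m b)
              + (1 / τ m) * aVE m (ΦVE m b - ΦVE m a) (ΦVE m a + ΦVE m b)))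
      hk (by
        intro s hs
        rw [mul_add, Finset.mul_sum]
        have : ∀ m, aVE m (ΦVE m s) (Φ1 a + Φ1 b) - aVE m (Φ1 s) (ΦVE m a + ΦVE m b)
              + (1 / τ m) * aVE m (ΦVE m s) (ΦVE m a + ΦVE m b)
            = (aVE m (ΦVE m a) (Φ1 a + Φ1 b) - aVE m (Φ1 a) (ΦVE m a + ΦVE m b)
              + (1 / τ m) * aVE m (ΦVE m a) (ΦVE m a + ΦVE m b))
              + (s - a) / (b - a) * (aVE m (ΦVE m b - ΦVE m a) (Φ1 a + Φ1 b)
              - aVE m (Φ1 b - Φ1 a) (ΦVE m a + ΦVE m b)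
              + (1 / τ m) * aVE m (ΦVE m b - ΦVE m a) (ΦVE m a + ΦVE m b)) := by
          intro m
          rw [eV m s hs, e1 s hs]
          simp only [map_add (aVE m), map_smul (aVE m), ContinuousLinearMap.add_apply,
            ContinuousLinearMap.smul_apply, smul_eq_mul]
          ring
        rw [Finset.sum_congr rfl fun m _ => this m, Finset.sum_add_distrib, e0 s hs, e1 s hs]
        simp only [map_add aE, map_smul aE, ContinuousLinearMap.add_apply,
            ContinuousLinearMap.smul_apply, smul_eq_mul]
        ring) hd
    have hsum : ∑ m, (aVE m (ΦVE m a) (Φ1 a + Φ1 b) - aVE m (Φ1 a) (ΦVE m a + ΦVE m b)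
              + (1 / τ m) * aVE m (ΦVE m a) (ΦVE m a + ΦVE m b))
        + (∑ m, (aVE m (ΦVE m b - ΦVE m a) (Φ1 a + Φ1 b)
              - aVE m (Φ1 b - Φ1 a) (ΦVE m a + ΦVE m b)
              + (1 / τ m) * aVE m (ΦVE m b - ΦVE m a) (ΦVE m a + ΦVE m b))) / 2
        = ∑ m, (1 / τ m) / 2 * aVE m (ΦVE m a + ΦVE m b) (ΦVE m a + ΦVE m b) := by
      rw [Finset.sum_div, ← Finset.sum_add_distrib]
      refine Finset.sum_congr rfl fun m _ => ?_
      simp only [map_add, map_sub, ContinuousLinearMap.add_apply,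
        ContinuousLinearMap.sub_apply]
      rw [haVE_symm m (Φ1 a) (ΦVE m a), haVE_symm m (Φ1 a) (ΦVE m b),
        haVE_symm m (Φ1 b) (ΦVE m a), haVE_symm m (Φ1 b) (ΦVE m b)]
      ring
    have hE : aE (Φ0 a) (Φ1 a + Φ1 b) - aE (Φ1 a) (Φ0 a + Φ0 b)
        + (aE (Φ0 b - Φ0 a) (Φ1 a + Φ1 b) - aE (Φ1 b - Φ1 a) (Φ0 a + Φ0 b)) / 2 = 0 := by
      simp only [map_add, map_sub, ContinuousLinearMap.sub_apply]
      rw [haE_symm (Φ1 a) (Φ0 a), haE_symm (Φ1 a) (Φ0 b),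
        haE_symm (Φ1 b) (Φ0 a), haE_symm (Φ1 b) (Φ0 b)]
      ring
    have hD : 0 ≤ ∑ m, (1 / τ m) / 2 * aVE m (ΦVE m a + ΦVE m b) (ΦVE m a + ΦVE m b) :=
      Finset.sum_nonneg fun m _ => mul_nonneg (by have := hτ m; positivity) (haVE_pos m _)
    rw [← Finset.mul_sum, Finset.sum_sub_distrib] at key
    have hki : 0 < (b - a)⁻¹ := inv_pos.2 (sub_pos.2 hk)
    refine le_of_mul_le_mul_left ?_ hki
    linarith
  have hmon : ∀ n ≤ N, mF (Φ1 (t n)) (Φ1 (t n)) + aE (Φ0 (t n)) (Φ0 (t n))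
          + ∑ m, aVE m (ΦVE m (t n)) (ΦVE m (t n))
        ≤ mF (Φ1 (t N)) (Φ1 (t N)) + aE (Φ0 (t N)) (Φ0 (t N))
          + ∑ m, aVE m (ΦVE m (t N)) (ΦVE m (t N)) := by
    intro n hn
    induction hn using Nat.decreasingInduction with
    | self => exact le_rfl
    | of_succ k hk ih => exact (hstep k hk).trans ih
  have hloc : ∀ K ≤ N, 1 ≤ K → ∀ s ∈ Set.Icc (t 0) (t K), ∃ n < N,
      s ∈ Set.Icc (t n) (t (n+1)) := by
    intro K
    induction K with
    | zero => intro _ h; omega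
    | succ K ih =>
      intro hK _ s hs
      rcases le_total (t K) s with h | h
      · exact ⟨K, hK, h, hs.2⟩
      · rcases Nat.eq_zero_or_pos K with rfl | h0
        · exact ⟨0, hK, hs⟩
        · exact ih (by omega) h0 s ⟨hs.1, h⟩
  intro s hs
  obtain ⟨n, hn, hsn⟩ := hloc N le_rfl hN s hs
  have hk : 0 < t (n+1) - t n := sub_pos.2 (htmono n hn)
  have r0 : 0 ≤ (s - t n) / (t (n+1) - t n) := div_nonneg (sub_nonneg.2 hsn.1) hk.le
  have r1 : (s - t n) / (t (n+1) - t n) ≤ 1 := by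
    rw [div_le_one hk]; linarith [hsn.2]
  have c1 := aux_convex mF hmF_symm hmF_pos (Φ1 (t n)) (Φ1 (t (n+1))) _ r0 r1
  have c0 := aux_convex aE haE_symm haE_pos (Φ0 (t n)) (Φ0 (t (n+1))) _ r0 r1
  have cV := Finset.sum_le_sum fun m (_ : m ∈ Finset.univ) =>
    aux_convex (aVE m) (haVE_symm m) (haVE_pos m) (ΦVE m (t n)) (ΦVE m (t (n+1))) _ r0 r1
  rw [← hΦ1aff n hn s hsn] at c1
  rw [← hΦ0aff n hn s hsn] at c0
  simp only [← hΦVEaff _ n hn s hsn] at cV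
  rw [Finset.sum_add_distrib, ← Finset.mul_sum, ← Finset.mul_sum] at cV
  have u1 := mul_le_mul_of_nonneg_left (hmon n hn.le) (sub_nonneg.2 r1)
  have u2 := mul_le_mul_of_nonneg_left (hmon (n+1) hn) r0
  refine (Real.sqrt_le_sqrt (y := mF (Φ1 (t N)) (Φ1 (t N)) + aE (Φ0 (t N)) (Φ0 (t N))
          + ∑ m, aVE m (ΦVE m (t N)) (ΦVE m (t N))) ?_).trans ?_
  · linarith
  · linarith [Real.sqrt_nonneg (mF (Φ1 (t N)) (Φ1 (t N)) + aE (Φ0 (t N)) (Φ0 (t N))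
          + ∑ m, aVE m (ΦVE m (t N)) (ΦVE m (t N)))]
end

section
/- The error representation formula holds: A(η(T), Ψ) = A(η(0), Φ(0)) − ∫₀ᵀ [ A(ρ̇(t), P₀Φ(t)) + B(ρ(t), P₀Φ(t)) − G(t)(P₀Φ(t)) ] dt. -/
theorem aux_cont {V : Type*} [NormedAddCommGroup V] [NormedSpace ℝ V]
    (a b : ℝ) (f : ℝ → V)
    (hf : ∀ s ∈ Set.Icc a b, f s = f a + ((s - a) / (b - a)) • (f b - f a)) :
    ContinuousOn f (Set.Icc a b) := by
  refine ContinuousOn.congr (f := fun s => f a + ((s - a) / (b - a)) • (f b - f a)) ?_ hf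
  apply Continuous.continuousOn
  fun_prop

theorem aux_int {V : Type*} [NormedAddCommGroup V] [NormedSpace ℝ V] [CompleteSpace V]
    (a b : ℝ) (hab : a < b) (f : ℝ → V)
    (hf : ∀ s ∈ Set.Icc a b, f s = f a + ((s - a) / (b - a)) • (f b - f a)) :
    ∫ s in a..b, f s = ((b - a) / 2) • (f a + f b) := by
  have h1 : ∫ s in a..b, f s = ∫ s in a..b, (f a + ((s - a) / (b - a)) • (f b - f a)) := by
    apply intervalIntegral.integral_congr
    intro s hs
    rw [Set.uIcc_of_le hab.le] at hs
    exact hf s hs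
  have hk : b - a ≠ 0 := (sub_pos.2 hab).ne'
  have h2 : ∫ s in a..b, (s - a) / (b - a) = (b - a) / 2 := by
    rw [intervalIntegral.integral_div, intervalIntegral.integral_sub (by simp) (by simp)]
    simp only [integral_id, intervalIntegral.integral_const, smul_eq_mul]
    field_simp
    ring
  rw [h1, intervalIntegral.integral_add (by simp)
    (Continuous.intervalIntegrable (by fun_prop) _ _),
    intervalIntegral.integral_smul_const, h2, intervalIntegral.integral_const]
  module

theorem aux_step {V : Type*} [NormedAddCommGroup V] [NormedSpace ℝ V] [CompleteSpace V]
    (Vh : Submodule ℝ V)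
    (A B : V →L[ℝ] V →L[ℝ] ℝ) (a b : ℝ) (hab : a < b)
    (G : ℝ → V →L[ℝ] ℝ) (hG : ContinuousOn G (Set.Icc a b))
    (u u' : ℝ → V) (hu : Continuous u) (hu' : Continuous u')
    (Ut U Φ : ℝ → V)
    (hUt_mem : ∀ s, Ut s ∈ Vh) (hU_mem : ∀ s, U s ∈ Vh) (hΦ_mem : ∀ s, Φ s ∈ Vh)
    (hUt_aff : ∀ s ∈ Set.Icc a b, Ut s = Ut a + ((s - a) / (b - a)) • (Ut b - Ut a))
    (hU_aff : ∀ s ∈ Set.Icc a b, U s = U a + ((s - a) / (b - a)) • (U b - U a))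
    (hΦ_aff : ∀ s ∈ Set.Icc a b, Φ s = Φ a + ((s - a) / (b - a)) • (Φ b - Φ a))
    (hGalerkin : ∀ w ∈ Vh,
      (∫ s in a..b, (A (u' s - (b - a)⁻¹ • (U b - U a)) w + B (u s - U s) w))
      = ∫ s in a..b, G s w)
    (hdual : ∀ w ∈ Vh,
      (∫ s in a..b, (-(A w ((b - a)⁻¹ • (Φ b - Φ a))) + B w (Φ s))) = 0) :
    ∫ s in a..b,
              (A (u' s - (b - a)⁻¹ • (Ut b - Ut a)) ((b - a)⁻¹ • ∫ r in a..b, Φ r)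
                + B (u s - Ut s) ((b - a)⁻¹ • ∫ r in a..b, Φ r)
                - G s ((b - a)⁻¹ • ∫ r in a..b, Φ r))
      = A (Ut a - U a) (Φ a) - A (Ut b - U b) (Φ b) := by
  have hk : b - a ≠ 0 := (sub_pos.2 hab).ne'
  have hw : (b - a)⁻¹ • ∫ r in a..b, Φ r = (1 / 2 : ℝ) • (Φ a + Φ b) := by
    rw [aux_int a b hab Φ hΦ_aff, smul_smul]
    congr 1
    field_simp
  rw [hw]
  have hwm : (1 / 2 : ℝ) • (Φ a + Φ b) ∈ Vh :=
    Vh.smul_mem _ (Vh.add_mem (hΦ_mem _) (hΦ_mem _))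
  generalize hwd : (1 / 2 : ℝ) • (Φ a + Φ b) = w at hwm ⊢
  have cUt := aux_cont a b Ut hUt_aff
  have cU := aux_cont a b U hU_aff
  have cΦ := aux_cont a b Φ hΦ_aff
  have iv : ∀ {f : ℝ → V}, ContinuousOn f (Set.Icc a b) →
      IntervalIntegrable f MeasureTheory.volume a b :=
    fun hf => ContinuousOn.intervalIntegrable_of_Icc hab.le hf
  have ii : ∀ {f : ℝ → ℝ}, ContinuousOn f (Set.Icc a b) →
      IntervalIntegrable f MeasureTheory.volume a b :=
    fun hf => ContinuousOn.intervalIntegrable_of_Icc hab.le hf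
  have cG : ContinuousOn (fun s => G s w) (Set.Icc a b) := hG.clm_apply continuousOn_const
  have cBU : ContinuousOn (fun s => B (u s - U s) w) (Set.Icc a b) :=
    (B.continuous.comp_continuousOn (hu.continuousOn.sub cU)).clm_apply continuousOn_const
  have cA : ∀ c : V, ContinuousOn (fun s => A (u' s - c) w) (Set.Icc a b) := fun c =>
    (A.continuous.comp_continuousOn (hu'.continuousOn.sub continuousOn_const)).clm_apply
      continuousOn_const
  have hη : ∀ s ∈ Set.Icc a b, (Ut - U) s
      = (Ut - U) a + ((s - a) / (b - a)) • ((Ut - U) b - (Ut - U) a) := by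
    intro s hs
    simp only [Pi.sub_apply]
    rw [hUt_aff s hs, hU_aff s hs]
    module
  have cη := aux_cont a b _ hη
  have iη := aux_int a b hab _ hη
  have cBη : ContinuousOn (fun s => B ((Ut - U) s) w) (Set.Icc a b) :=
    (B.continuous.comp_continuousOn cη).clm_apply continuousOn_const
  have e1 : ∫ s in a..b, B ((Ut - U) s) w = B (((b - a) / 2) • ((Ut - U) a + (Ut - U) b)) w := by
    rw [← iη]
    exact (B.flip w).intervalIntegral_comp_comm (iv cη)
  have e2 := hdual ((1 / 2 : ℝ) • ((Ut - U) a + (Ut - U) b))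
    (Vh.smul_mem _ (Vh.add_mem (Vh.sub_mem (hUt_mem _) (hU_mem _))
      (Vh.sub_mem (hUt_mem _) (hU_mem _))))
  have cBΦ : ∀ v : V, ContinuousOn (fun s => B v (Φ s)) (Set.Icc a b) := fun v =>
    (B v).continuous.comp_continuousOn cΦ
  rw [intervalIntegral.integral_add (by simp) (ii (cBΦ _)), intervalIntegral.integral_const,
    (B _).intervalIntegral_comp_comm (iv cΦ), aux_int a b hab Φ hΦ_aff] at e2
  have e3 := hGalerkin w hwm
  have e4 : ∀ s, A (u' s - (b - a)⁻¹ • (Ut b - Ut a)) w + B (u s - Ut s) w - G s w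
      = (A (u' s - (b - a)⁻¹ • (U b - U a)) w + B (u s - U s) w) - G s w
        - (A ((b - a)⁻¹ • ((Ut b - U b) - (Ut a - U a))) w + B ((Ut - U) s) w) := by
    intro s
    simp only [map_sub, map_smul, Pi.sub_apply, sub_apply, smul_apply, smul_eq_mul]
    ring
  simp_rw [e4]
  rw [intervalIntegral.integral_sub, intervalIntegral.integral_sub, e3,
    intervalIntegral.integral_add (by simp) (ii cBη), e1, intervalIntegral.integral_const]
  rotate_left
  · exact ii ((cA _).add cBU)
  · exact ii cG
  · exact ii (((cA _).add cBU).sub cG)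
  · exact ii (continuousOn_const.add cBη)
  subst hwd
  simp only [map_sub, map_add, map_smul, Pi.sub_apply, sub_apply, add_apply, smul_apply, smul_eq_mul] at e2 ⊢
  field_simp at e2 ⊢
  linarith

/-- Error representation formula via the discrete dual problem:
`A(η(T), Ψ) = A(η(0), Φ(0)) - ∫₀ᵀ [A(ρ̇, P₀Φ) + B(ρ, P₀Φ) - G(t)(P₀Φ)] dt`,
where `ρ = u - Ũ`, `η = Ũ - U`, `Ψ = Φ(T)`, and `P₀Φ` is the piecewise constant
(in time) interval average of `Φ`.  Here `u` solves the continuous problem in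
the sense of the approximate Galerkin orthogonality, `Ũ` is an arbitrary
`V_h`-valued piecewise linear (in time) interpolant, `U` is the finite element
solution, and `Φ` solves the discrete dual problem. -/
theorem viscoelastic_error_representation
    {V : Type*} [NormedAddCommGroup V] [NormedSpace ℝ V] [CompleteSpace V]
    (Vh : Submodule ℝ V)
    (A B : V →L[ℝ] V →L[ℝ] ℝ)
    (N : ℕ) (hN : 1 ≤ N)
    (t : ℕ → ℝ) (ht0 : t 0 = 0) (htmono : ∀ n < N, t n < t (n + 1))
    (T : ℝ) (hT : t N = T)
    (G : ℝ → V →L[ℝ] ℝ) (hG : ContinuousOn G (Set.Icc 0 T))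
    (u u' : ℝ → V) (hu : ∀ s, HasDerivAt u (u' s) s) (hu' : Continuous u')
    (Ut U Φ : ℝ → V)
    (hUt_mem : ∀ s, Ut s ∈ Vh) (hU_mem : ∀ s, U s ∈ Vh) (hΦ_mem : ∀ s, Φ s ∈ Vh)
    -- `Ũ`, `U`, `Φ` are continuous and affine on each `[t_n, t_{n+1}]`
    (hUt_aff : ∀ n < N, ∀ s ∈ Set.Icc (t n) (t (n + 1)),
      Ut s = Ut (t n) + ((s - t n) / (t (n + 1) - t n)) • (Ut (t (n + 1)) - Ut (t n)))
    (hU_aff : ∀ n < N, ∀ s ∈ Set.Icc (t n) (t (n + 1)),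
      U s = U (t n) + ((s - t n) / (t (n + 1) - t n)) • (U (t (n + 1)) - U (t n)))
    (hΦ_aff : ∀ n < N, ∀ s ∈ Set.Icc (t n) (t (n + 1)),
      Φ s = Φ (t n) + ((s - t n) / (t (n + 1) - t n)) • (Φ (t (n + 1)) - Φ (t n)))
    -- approximate Galerkin orthogonality (the derivative of `U` on
    -- `(t_n, t_{n+1})` is the constant `(U(t_{n+1}) - U(t_n))/k_n`)
    (hGalerkin : ∀ n < N, ∀ w ∈ Vh,
      (∫ s in t n..t (n + 1),
        (A (u' s - (t (n + 1) - t n)⁻¹ • (U (t (n + 1)) - U (t n))) w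
          + B (u s - U s) w))
      = ∫ s in t n..t (n + 1), G s w)
    -- discrete dual problem
    (hdual : ∀ n < N, ∀ w ∈ Vh,
      (∫ s in t n..t (n + 1),
        (-(A w ((t (n + 1) - t n)⁻¹ • (Φ (t (n + 1)) - Φ (t n)))) + B w (Φ s))) = 0) :
    A (Ut T - U T) (Φ T)
      = A (Ut 0 - U 0) (Φ 0)
        - ∑ n ∈ Finset.range N,
            ∫ s in t n..t (n + 1),
              (A (u' s - (t (n + 1) - t n)⁻¹ • (Ut (t (n + 1)) - Ut (t n)))
                  ((t (n + 1) - t n)⁻¹ • ∫ r in t n..t (n + 1), Φ r)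
                + B (u s - Ut s)
                  ((t (n + 1) - t n)⁻¹ • ∫ r in t n..t (n + 1), Φ r)
                - G s ((t (n + 1) - t n)⁻¹ • ∫ r in t n..t (n + 1), Φ r)) := by
  have htle : ∀ n ≤ N, ∀ m ≤ n, t m ≤ t n := by
    intro n
    induction n with
    | zero => intro _ m hm; simp [Nat.le_zero.1 hm]
    | succ n ih =>
      intro hn m hm
      rcases Nat.lt_or_ge n m with h | h
      · have : m = n + 1 := by omega
        rw [this]
      · exact (ih (by omega) m h).trans (htmono n (by omega)).le
  have hc : Continuous u := continuous_iff_continuousAt.2 fun s => (hu s).continuousAt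
  have key : ∀ n ∈ Finset.range N, _ = _ := fun n hn' => by
    have hn := Finset.mem_range.1 hn'
    exact aux_step Vh A B (t n) (t (n + 1)) (htmono n hn) G
      (hG.mono (Set.Icc_subset_Icc (ht0 ▸ htle n hn.le 0 (Nat.zero_le _))
        (hT ▸ htle N le_rfl (n + 1) hn))) u u' hc hu' Ut U Φ hUt_mem hU_mem hΦ_mem
      (hUt_aff n hn) (hU_aff n hn) (hΦ_aff n hn) (hGalerkin n hn) (hdual n hn)
  rw [Finset.sum_congr rfl key,
    Finset.sum_range_sub' (fun n => A (Ut (t n) - U (t n)) (Φ (t n))) N, ht0, hT]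
  ring
end

section
/- The identity ⟨BΦ(t_j), A⁻¹BΦ(t_j)⟩ − 2 Σ_{n=1}^{L} k_n·⟨BΦ̇_n, Φ̇_n⟩ = ⟨BΦ(t_i), A⁻¹BΦ(t_i)⟩ holds, where Φ̇_n denotes the (constant) derivative of Φ on the interval J_n; this is the conservation identity underlying the L² stability estimate for the discrete dual problem. -/
open scoped RealInnerProductSpace

/-- Conservation identity underlying the `L²` stability estimate for the
discrete dual problem: if `Φ` is continuous piecewise affine on the partition
`t_i = s_0 < ⋯ < s_L = t_j` and satisfies
`∫_{J_n} (-⟨AΦ̇, w⟩ + ⟨BΦ, w⟩) dt = 0` for all `w`, then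
`⟨BΦ(t_j), A⁻¹BΦ(t_j)⟩ - 2 ∑_n k_n ⟨BΦ̇_n, Φ̇_n⟩ = ⟨BΦ(t_i), A⁻¹BΦ(t_i)⟩`,
where `Φ̇_n = (Φ(s_n) - Φ(s_{n-1}))/k_n` is the constant derivative of `Φ`
on `J_n`. -/
theorem viscoelastic_dual_L2_conservation_identity
    {V : Type*} [NormedAddCommGroup V] [InnerProductSpace ℝ V]
    [FiniteDimensional ℝ V]
    (A Ainv B : V →ₗ[ℝ] V)
    (hA_symm : ∀ x y : V, ⟪A x, y⟫ = ⟪x, A y⟫)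
    (hA_pos : ∀ x : V, x ≠ 0 → 0 < ⟪A x, x⟫)
    (hAinv : ∀ x, A (Ainv x) = x) (hAinv' : ∀ x, Ainv (A x) = x)
    (L : ℕ) (s : ℕ → ℝ) (hsmono : ∀ n < L, s n < s (n + 1))
    (Φ : ℝ → V)
    -- `Φ` is continuous and affine on each `[s_n, s_{n+1}]`
    (hΦ_aff : ∀ n < L, ∀ x ∈ Set.Icc (s n) (s (n + 1)),
      Φ x = Φ (s n) + ((x - s n) / (s (n + 1) - s n)) • (Φ (s (n + 1)) - Φ (s n)))
    -- the discrete dual equation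
    (hdual : ∀ n < L, ∀ w : V,
      (∫ x in s n..s (n + 1),
        (-⟪A ((s (n + 1) - s n)⁻¹ • (Φ (s (n + 1)) - Φ (s n))), w⟫
          + ⟪B (Φ x), w⟫)) = 0) :
    ⟪B (Φ (s L)), Ainv (B (Φ (s L)))⟫
      - 2 * ∑ n ∈ Finset.range L,
          (s (n + 1) - s n) *
            ⟪B ((s (n + 1) - s n)⁻¹ • (Φ (s (n + 1)) - Φ (s n))),
              (s (n + 1) - s n)⁻¹ • (Φ (s (n + 1)) - Φ (s n))⟫
    = ⟪B (Φ (s 0)), Ainv (B (Φ (s 0)))⟫ := by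
  have hsym : ∀ x y : V, ⟪x, Ainv y⟫ = ⟪y, Ainv x⟫ := by
    intro x y
    have h := hA_symm (Ainv x) (Ainv y)
    rw [hAinv, hAinv] at h
    rw [h, real_inner_comm]
  have step : ∀ n < L, ⟪B (Φ (s (n + 1))), Ainv (B (Φ (s (n + 1))))⟫
      - ⟪B (Φ (s n)), Ainv (B (Φ (s n)))⟫ = 2 * ((s (n + 1) - s n) *
            ⟪B ((s (n + 1) - s n)⁻¹ • (Φ (s (n + 1)) - Φ (s n))),
              (s (n + 1) - s n)⁻¹ • (Φ (s (n + 1)) - Φ (s n))⟫) := by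
    intro n hn
    have hlt := hsmono n hn
    have haff := hΦ_aff n hn
    have hd := hdual n hn
    generalize s (n + 1) = q at *
    generalize s n = p at *
    generalize Φ q = b at *
    generalize Φ p = a at *
    have hk : q - p ≠ 0 := by linarith
    obtain ⟨D, hD⟩ : ∃ D, D = (q - p)⁻¹ • (b - a) := ⟨_, rfl⟩
    have hba : b - a = (q - p) • D := by rw [hD, smul_inv_smul₀ hk]
    rw [← hD]
    simp only [← hD] at hd
    have key : (2 : ℝ) • A D = B a + B b := by
      apply ext_inner_right ℝ
      intro w
      have h := hd w
      have e : (∫ x in p..q, (-⟪A D, w⟫ + ⟪B (Φ x), w⟫))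
          = ∫ x in p..q, ((-⟪A D, w⟫ + ⟪B a, w⟫ - p * ⟪B D, w⟫) + x * ⟪B D, w⟫) := by
        apply intervalIntegral.integral_congr
        intro x hx
        rw [Set.uIcc_of_le hlt.le] at hx
        have h1 : Φ x = a + (x - p) • D := by
          rw [haff x hx, hD, smul_smul, div_eq_mul_inv]
        simp only [h1, map_add, map_smul, inner_add_left, real_inner_smul_left]
        ring
      rw [e, intervalIntegral.integral_add (by simp)
        (Continuous.intervalIntegrable (by fun_prop) _ _),
        intervalIntegral.integral_mul_const, integral_id, intervalIntegral.integral_const,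
        smul_eq_mul] at h
      have hb : b = a + (q - p) • D := by rw [← hba]; abel
      simp only [hb, map_add, map_smul, inner_add_left, real_inner_smul_left]
      apply mul_left_cancel₀ hk
      linear_combination (-2) * h
    have hDD : (2 : ℝ) • D = Ainv (B a) + Ainv (B b) := by
      rw [← map_add, ← key, map_smul, hAinv']
    have h2 : ⟪B (b - a), (2 : ℝ) • D⟫ = 2 * ((q - p) * ⟪B D, D⟫) := by
      rw [hba, map_smul, real_inner_smul_left, real_inner_smul_right]; ring
    rw [← h2, hDD, map_sub, inner_sub_left, inner_add_right, inner_add_right, hsym (B b) (B a)]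
    ring
  rw [Finset.mul_sum, ← Finset.sum_congr rfl
    (fun n hn => step n (Finset.mem_range.mp hn)),
    Finset.sum_range_sub (fun n => ⟪B (Φ (s n)), Ainv (B (Φ (s n)))⟫)]
  ring
end

section
/- If ∫₀ᵏ [−Φ̇_VE(t) + Φ̇_0(t) + (1/τ)·Φ_VE(t)] dt = 0, then Φ_VE(0) = α·(Φ_0(0) − Φ_0(k)) + β·Φ_VE(k), where α = 2/(2 + k/τ) and β = (2 − k/τ)/(2 + k/τ); this is the explicit backward-in-time solution of the ODE relating the dual viscoelastic variable to the dual displacement variable over one timestep. -/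
/-- Explicit backward-in-time solution of the ODE relating the dual viscoelastic
variable to the dual displacement variable over one timestep: if `Φ_0` and
`Φ_VE` are affine on `[0,k]` and
`∫₀ᵏ (-Φ̇_VE + Φ̇_0 + (1/τ) Φ_VE) dt = 0` (where the derivative of an affine
function `W` is the constant `(W(k) - W(0))/k`), then
`Φ_VE(0) = α (Φ_0(0) - Φ_0(k)) + β Φ_VE(k)` with `α = 2/(2 + k/τ)` and
`β = (2 - k/τ)/(2 + k/τ)`. -/
theorem viscoelastic_dual_backward_update
    {V : Type*} [NormedAddCommGroup V] [NormedSpace ℝ V] [CompleteSpace V]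
    (τ k : ℝ) (hτ : 0 < τ) (hk : 0 < k)
    (Φ0 ΦVE : ℝ → V)
    (hΦ0aff : ∀ t ∈ Set.Icc (0:ℝ) k, Φ0 t = Φ0 0 + (t / k) • (Φ0 k - Φ0 0))
    (hΦVEaff : ∀ t ∈ Set.Icc (0:ℝ) k, ΦVE t = ΦVE 0 + (t / k) • (ΦVE k - ΦVE 0))
    (hres : (∫ t in (0:ℝ)..k,
        (-(k⁻¹ • (ΦVE k - ΦVE 0)) + k⁻¹ • (Φ0 k - Φ0 0)
          + (1 / τ) • ΦVE t)) = 0) :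
    ΦVE 0 = (2 / (2 + k / τ)) • (Φ0 0 - Φ0 k)
      + ((2 - k / τ) / (2 + k / τ)) • ΦVE k := by
  have h1 : ∀ t ∈ Set.uIcc (0:ℝ) k,
      (-(k⁻¹ • (ΦVE k - ΦVE 0)) + k⁻¹ • (Φ0 k - Φ0 0) + (1 / τ) • ΦVE t)
      = (-(k⁻¹ • (ΦVE k - ΦVE 0)) + k⁻¹ • (Φ0 k - Φ0 0) + (1 / τ) • ΦVE 0)
        + t • ((1 / (τ * k)) • (ΦVE k - ΦVE 0)) := by
    intro t ht
    rw [Set.uIcc_of_le hk.le] at ht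
    rw [hΦVEaff t ht]
    match_scalars <;> field_simp <;> ring
  rw [intervalIntegral.integral_congr h1, intervalIntegral.integral_add
    (Continuous.intervalIntegrable (by fun_prop) _ _)
    (Continuous.intervalIntegrable (by fun_prop) _ _),
    intervalIntegral.integral_const, intervalIntegral.integral_smul_const, integral_id] at hres
  have hd : 2 + k / τ ≠ 0 := by positivity
  have hd' : 2 * τ + k ≠ 0 := by positivity
  have h2 := congrArg (fun v : V => (2 / (2 + k / τ)) • v) hres
  simp only [smul_zero] at h2
  rw [← sub_eq_zero]
  refine Eq.trans ?_ h2
  match_scalars <;> field_simp <;> ring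
end

section
/- For every 1 ≤ n ≤ N: Φ_VE(n−1) = α·Φ_0(n−1) − α·β^{N−n}·Φ_0(N) − (α²k/τ)·Σ_{i=n}^{N−1} β^{i−n}·Φ_0(i); i.e., the dual viscoelastic variable admits a closed-form expansion entirely in terms of the dual displacement values, with exponentially decaying coefficients. -/
/-- Closed-form expansion of the dual viscoelastic variable entirely in terms of
the dual displacement values: if `Φ_VE(N) = 0` and
`Φ_VE(i-1) = α (Φ_0(i-1) - Φ_0(i)) + β Φ_VE(i)` for `1 ≤ i ≤ N`, where
`α = 2/(2 + k/τ)` and `β = (2 - k/τ)/(2 + k/τ)`, then for every `1 ≤ n ≤ N`,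
`Φ_VE(n-1) = α Φ_0(n-1) - α β^{N-n} Φ_0(N)
  - (α² k/τ) ∑_{i=n}^{N-1} β^{i-n} Φ_0(i)`. -/
theorem viscoelastic_dual_expansion
    {V : Type*} [AddCommGroup V] [Module ℝ V]
    (τ k : ℝ) (hτ : 0 < τ) (hk : 0 < k)
    (α β : ℝ) (hα : α = 2 / (2 + k / τ)) (hβ : β = (2 - k / τ) / (2 + k / τ))
    (N : ℕ) (hN : 1 ≤ N)
    (ΦVE Φ0 : ℕ → V)
    (hterm : ΦVE N = 0)
    (hrec : ∀ i : ℕ, 1 ≤ i → i ≤ N →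
      ΦVE (i - 1) = α • (Φ0 (i - 1) - Φ0 i) + β • ΦVE i) :
    ∀ n : ℕ, 1 ≤ n → n ≤ N →
      ΦVE (n - 1) = α • Φ0 (n - 1) - (α * β ^ (N - n)) • Φ0 N
        - (α ^ 2 * k / τ) • ∑ i ∈ Finset.Ico n N, β ^ (i - n) • Φ0 i := by
  have hc : α ^ 2 * k / τ = α * (1 - β) := by
    have h2 : (2 + k / τ) ≠ 0 := by positivity
    have h3 : (2 * τ + k) ≠ 0 := by positivity
    have hτ' : τ ≠ 0 := hτ.ne'
    have h1 : 1 - β = α * (k / τ) := by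
      rw [hα, hβ, eq_comm, div_mul_eq_mul_div, eq_sub_iff_add_eq, ← add_div, div_eq_one_iff_eq h2]
      ring
    rw [h1]
    ring
  rw [hc]
  intro n hn hnN
  induction hnN using Nat.decreasingInduction with
  | self => 
    rw [hrec N hn le_rfl, hterm]
    simp [smul_sub]
  | of_succ m hm ih =>
    have ih' := ih (by omega)
    rw [Nat.add_sub_cancel] at ih'
    have hs : ∑ i ∈ Finset.Ico (m + 1) N, β ^ (i - m) • Φ0 i
        = β • ∑ i ∈ Finset.Ico (m + 1) N, β ^ (i - (m + 1)) • Φ0 i := by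
      rw [Finset.smul_sum]
      refine Finset.sum_congr rfl fun i hi => ?_
      have hi' := (Finset.mem_Ico.mp hi).1
      rw [smul_smul, ← pow_succ', show i - (m + 1) + 1 = i - m by omega]
    rw [hrec m hn hm.le, ih', Finset.sum_eq_sum_Ico_succ_bot hm, hs,
      show N - m = N - (m + 1) + 1 by omega, Nat.sub_self]
    module
end

section
/- For every 1 ≤ n ≤ N: ‖α·Φ_0(n−1) − Φ_VE(n−1)‖ ≤ α·|β|^{N−n}·‖Φ_0(N)‖ + (α²k/τ)·Σ_{i=n}^{N−1} |β|^{i−n}·‖Φ_0(i)‖, and consequently ‖α·Φ_0(n−1) − Φ_VE(n−1)‖ ≤ ‖Φ_0(N)‖ + max_{n ≤ i ≤ N−1} ‖Φ_0(i)‖ (with the convention that a sum or maximum over an empty index range is 0). -/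
/-- Norm bounds for the dual viscoelastic variable in terms of the dual
displacement values: under the terminal condition `Φ_VE(N) = 0` and the
backward recurrence `Φ_VE(i-1) = α (Φ_0(i-1) - Φ_0(i)) + β Φ_VE(i)`, for every
`1 ≤ n ≤ N` we have both
`‖α Φ_0(n-1) - Φ_VE(n-1)‖ ≤ α |β|^{N-n} ‖Φ_0(N)‖
    + (α² k/τ) ∑_{i=n}^{N-1} |β|^{i-n} ‖Φ_0(i)‖`
and
`‖α Φ_0(n-1) - Φ_VE(n-1)‖ ≤ ‖Φ_0(N)‖ + max_{n ≤ i ≤ N-1} ‖Φ_0(i)‖`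
(the maximum over an empty index range being `0`). -/
theorem viscoelastic_dual_norm_bounds
    {V : Type*} [NormedAddCommGroup V] [NormedSpace ℝ V]
    (τ k : ℝ) (hτ : 0 < τ) (hk : 0 < k)
    (α β : ℝ) (hα : α = 2 / (2 + k / τ)) (hβ : β = (2 - k / τ) / (2 + k / τ))
    (N : ℕ) (hN : 1 ≤ N)
    (ΦVE Φ0 : ℕ → V)
    (hterm : ΦVE N = 0)
    (hrec : ∀ i : ℕ, 1 ≤ i → i ≤ N →
      ΦVE (i - 1) = α • (Φ0 (i - 1) - Φ0 i) + β • ΦVE i) :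
    ∀ n : ℕ, 1 ≤ n → n ≤ N →
      ‖α • Φ0 (n - 1) - ΦVE (n - 1)‖
          ≤ α * |β| ^ (N - n) * ‖Φ0 N‖
            + (α ^ 2 * k / τ) * ∑ i ∈ Finset.Ico n N, |β| ^ (i - n) * ‖Φ0 i‖
        ∧ ‖α • Φ0 (n - 1) - ΦVE (n - 1)‖
          ≤ ‖Φ0 N‖ + ↑((Finset.Ico n N).sup fun i => ‖Φ0 i‖₊) := by
  have hx : 0 < k / τ := div_pos hk hτ
  have hα0 : 0 < α := by rw [hα]; positivity
  have hab : 2 * α = 1 + β := by rw [hα, hβ]; field_simp; ring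
  have hc : α ^ 2 * k / τ = α * (1 - β) := by
    have : α * (k / τ) = 1 - β := by
      rw [hα, hβ]
      generalize k / τ = x at hx
      field_simp
      ring
    rw [← this]; ring
  have hβ1 : 0 < 1 - β := by
    have h : 0 < α ^ 2 * k / τ := by positivity
    rw [hc] at h
    exact (mul_pos_iff_of_pos_left hα0).1 h
  have hb1 : |β| < 1 := abs_lt.2 ⟨by linarith, by linarith⟩
  have hb0 : 0 ≤ |β| := abs_nonneg β
  have hα1 : α ≤ 1 := by linarith
  have hcb : α * (1 - β) ≤ 1 - |β| := by
    have h2 : |β| ^ 2 = β ^ 2 := sq_abs β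
    have h3 : α = (1 + β) / 2 := by linarith
    rw [h3]
    nlinarith [sq_nonneg (1 - |β|)]
  have hc0 : 0 ≤ α * (1 - β) := by positivity
  have hlast : ‖α • Φ0 (N - 1) - ΦVE (N - 1)‖ ≤ α * ‖Φ0 N‖ := by
    rw [hrec N hN le_rfl, hterm]
    have : α • Φ0 (N - 1) - (α • (Φ0 (N - 1) - Φ0 N) + β • (0 : V)) = α • Φ0 N := by
      module
    rw [this, norm_smul, Real.norm_of_nonneg hα0.le]
  have hstep : ∀ n, 1 ≤ n → n ≤ N → ‖α • Φ0 (n - 1) - ΦVE (n - 1)‖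
      ≤ |β| * ‖α • Φ0 n - ΦVE n‖ + α * (1 - β) * ‖Φ0 n‖ := by
    intro n h1 h2
    have : α • Φ0 (n - 1) - ΦVE (n - 1)
        = β • (α • Φ0 n - ΦVE n) + (α * (1 - β)) • Φ0 n := by
      rw [hrec n h1 h2]; module
    rw [this]
    refine (norm_add_le _ _).trans (le_of_eq ?_)
    rw [norm_smul, norm_smul, Real.norm_of_nonneg hc0, Real.norm_eq_abs]
  rw [hc]
  intro n hn hnN
  induction hnN using Nat.decreasingInduction with
  | self =>
    refine ⟨by simpa using hlast, ?_⟩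
    have := mul_le_of_le_one_left (norm_nonneg (Φ0 N)) hα1
    simpa using hlast.trans this
  | of_succ n hlt ih =>
    obtain ⟨ih1, ih2⟩ := ih (by omega)
    have hs := hstep n hn hlt.le
    rw [Nat.add_sub_cancel] at ih1 ih2
    constructor
    · refine hs.trans ?_
      rw [Finset.sum_eq_sum_Ico_succ_bot hlt]
      have e1 : |β| ^ (N - n) = |β| * |β| ^ (N - (n + 1)) := by
        rw [← pow_succ']; congr 1; omega
      have e2 : ∑ i ∈ Finset.Ico (n + 1) N, |β| ^ (i - n) * ‖Φ0 i‖
          = |β| * ∑ i ∈ Finset.Ico (n + 1) N, |β| ^ (i - (n + 1)) * ‖Φ0 i‖ := by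
        rw [Finset.mul_sum]
        refine Finset.sum_congr rfl fun i hi => ?_
        have := (Finset.mem_Ico.1 hi).1
        rw [← mul_assoc, ← pow_succ']
        congr 2; omega
      rw [e1, e2, Nat.sub_self, pow_zero]
      have := mul_le_mul_of_nonneg_left ih1 hb0
      linarith
    · refine hs.trans ?_
      have hM1 : (((Finset.Ico (n + 1) N).sup fun i => ‖Φ0 i‖₊ : NNReal) : ℝ)
          ≤ ((Finset.Ico n N).sup fun i => ‖Φ0 i‖₊ : NNReal) :=
        NNReal.coe_le_coe.2 (Finset.sup_mono (Finset.Ico_subset_Ico_left (Nat.le_succ n)))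
      have hM2 : ‖Φ0 n‖ ≤ ((Finset.Ico n N).sup fun i => ‖Φ0 i‖₊ : NNReal) := by
        rw [← coe_nnnorm]
        exact NNReal.coe_le_coe.2
          (Finset.le_sup (f := fun i => ‖Φ0 i‖₊) (Finset.mem_Ico.2 ⟨le_rfl, hlt⟩))
      have h1 := mul_le_mul_of_nonneg_left (ih2.trans (add_le_add_right hM1 _)) hb0
      have h2 := mul_le_mul hcb hM2 (norm_nonneg _) (by linarith)
      have h3 := mul_le_of_le_one_left (norm_nonneg (Φ0 N)) hb1.le
      linarith
end
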